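/- Let Ω = 𝕋² × (−h, 0) with 𝕋² = ℝ²/ℤ² and h > 0. There exists a constant C > 0 (independent of h and f) such that for every C¹ function f : 𝕋² × [−h, 0] → ℝ, ‖ ∫_{−h}^{0} |f(·, ·, z)| dz ‖_{L⁴(𝕋²)} ≤ C h^{1/2} ‖f‖_{L²(Ω)}^{1/2} ( ‖f‖_{L²(Ω)} + ‖∇₂ f‖_{L²(Ω)} )^{1/2}. -/

import Mathlib

open MeasureTheory

/-- The measure on the fundamental domain `(0,1)² × (-h,0)` of the slab
`Ω = 𝕋² × (-h, 0)`. -/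
noncomputable def slabMeasure (h : ℝ) : Measure (ℝ × ℝ × ℝ) :=
  volume.restrict (Set.Ioo (0 : ℝ) 1 ×ˢ Set.Ioo (0 : ℝ) 1 ×ˢ Set.Ioo (-h) 0)

/-- The measure on the fundamental domain `(0,1)²` of the torus `𝕋² = ℝ²/ℤ²`. -/
noncomputable def torus2Measure : Measure (ℝ × ℝ) :=
  volume.restrict (Set.Ioo (0 : ℝ) 1 ×ˢ Set.Ioo (0 : ℝ) 1)

/-- A function on `ℝ³` represents a function on `Ω = 𝕋² × (-h,0)` if it is
`1`-periodic in both horizontal variables. -/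
def HorizontallyPeriodic {α : Type*} (f : ℝ × ℝ × ℝ → α) : Prop :=
  (∀ x y z : ℝ, f (x + 1, y, z) = f (x, y, z)) ∧
    ∀ x y z : ℝ, f (x, y + 1, z) = f (x, y, z)

open scoped ENNReal

/-- One-dimensional Agmon-type inequality on the unit interval. -/
lemma enorm_sq_le_lintegral_unitInterval {g g' : ℝ → ℝ} (hg : ∀ s, HasDerivAt g (g' s) s)
    (hg' : Continuous g') {x : ℝ} (hx : x ∈ Set.Ioo (0 : ℝ) 1) :
    ‖g x‖ₑ ^ 2 ≤ ∫⁻ s in Set.Ioo (0 : ℝ) 1, (‖g s‖ₑ ^ 2 + 2 * (‖g s‖ₑ * ‖g' s‖ₑ)) := by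
  have hgc : Continuous g := continuous_iff_continuousAt.2 fun s => (hg s).continuousAt
  have key : ∀ s ∈ Set.Ioo (0 : ℝ) 1,
      ‖g x‖ₑ ^ 2 ≤ ‖g s‖ₑ ^ 2 + ∫⁻ t in Set.Ioo (0 : ℝ) 1, 2 * (‖g t‖ₑ * ‖g' t‖ₑ) := by
    intro s hs
    have hderiv : ∀ t ∈ Set.uIcc s x, HasDerivAt (fun t => g t ^ 2) (2 * (g t * g' t)) t := by
      intro t _
      simpa [mul_assoc] using (hg t).fun_pow 2
    have hftc := intervalIntegral.integral_eq_sub_of_hasDerivAt hderiv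
      ((continuous_const.mul (hgc.mul hg')).intervalIntegrable s x)
    have hsub : Set.uIoc s x ⊆ Set.Ioo 0 1 := by
      intro t ht
      rw [Set.mem_uIoc] at ht
      obtain ⟨h₁, h₂⟩ | ⟨h₁, h₂⟩ := ht
      · exact ⟨hs.1.trans h₁, h₂.trans_lt hx.2⟩
      · exact ⟨hx.1.trans h₁, h₂.trans_lt hs.2⟩
    calc ‖g x‖ₑ ^ 2 = ‖g s ^ 2 + ∫ t in s..x, 2 * (g t * g' t)‖ₑ := by
          rw [hftc, ← enorm_pow]; congr 1; ring
      _ ≤ ‖g s ^ 2‖ₑ + ‖∫ t in s..x, 2 * (g t * g' t)‖ₑ := enorm_add_le _ _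
      _ ≤ ‖g s‖ₑ ^ 2 + ∫⁻ t in Set.Ioo (0 : ℝ) 1, 2 * (‖g t‖ₑ * ‖g' t‖ₑ) := by
          rw [enorm_pow]
          gcongr
          have hle : ‖∫ t in s..x, 2 * (g t * g' t)‖ₑ
              = ‖∫ t in Set.uIoc s x, 2 * (g t * g' t)‖ₑ := by
            rw [← ofReal_norm, intervalIntegral.norm_intervalIntegral_eq, ofReal_norm]
          rw [hle]
          refine (enorm_integral_le_lintegral_enorm _).trans ?_
          refine (lintegral_mono_set hsub).trans (le_of_eq ?_)
          refine lintegral_congr fun t => ?_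
          rw [enorm_mul, enorm_mul]
          congr 1
          simp [Real.enorm_eq_ofReal]
  calc ‖g x‖ₑ ^ 2 = ∫⁻ _ in Set.Ioo (0 : ℝ) 1, ‖g x‖ₑ ^ 2 := by simp
    _ ≤ ∫⁻ s in Set.Ioo (0 : ℝ) 1,
          (‖g s‖ₑ ^ 2 + ∫⁻ t in Set.Ioo (0 : ℝ) 1, 2 * (‖g t‖ₑ * ‖g' t‖ₑ)) :=
        setLIntegral_mono' measurableSet_Ioo key
    _ = _ := by
        rw [lintegral_add_right _ measurable_const, lintegral_add_left (by fun_prop)]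
        simp

/-- A Loomis–Whitney-type inequality: if `φ` is dominated by the integral of `u` in the first
variable and by the integral of `v` in the second one, then the square of its partial integral
over the third variable is controlled by the product of the total integrals. -/
lemma lintegral_sq_lintegral_le {α β γ : Type*} [MeasurableSpace α] [MeasurableSpace β]
    [MeasurableSpace γ] {μ : Measure α} {ν : Measure β} {κ : Measure γ} [SFinite μ] [SFinite ν]
    [SFinite κ] {φ u v : α × β × γ → ℝ≥0∞} (hu : Measurable u) (hv : Measurable v)
    (hφu : ∀ᵐ x ∂μ, ∀ y z, φ (x, y, z) ≤ ∫⁻ s, u (s, y, z) ∂μ)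
    (hφv : ∀ᵐ y ∂ν, ∀ x z, φ (x, y, z) ≤ ∫⁻ s, v (x, s, z) ∂ν) :
    ∫⁻ p, (∫⁻ z, φ (p.1, p.2, z) ∂κ) ^ 2 ∂(μ.prod ν) ≤
      (∫⁻ q, u q ∂(μ.prod (ν.prod κ))) * ∫⁻ q, v q ∂(μ.prod (ν.prod κ)) := by
  set A : β → ℝ≥0∞ := fun y => ∫⁻ z, ∫⁻ s, u (s, y, z) ∂μ ∂κ
  set B : α → ℝ≥0∞ := fun x => ∫⁻ z, ∫⁻ s, v (x, s, z) ∂ν ∂κ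
  have hAm : Measurable A := by
    refine Measurable.lintegral_prod_right' (f := fun p : β × γ => ∫⁻ s, u (s, p.1, p.2) ∂μ) ?_
    exact Measurable.lintegral_prod_right'
      (f := fun p : (β × γ) × α => u (p.2, p.1.1, p.1.2)) (by fun_prop)
  have hBm : Measurable B := by
    refine Measurable.lintegral_prod_right' (f := fun p : α × γ => ∫⁻ s, v (p.1, s, p.2) ∂ν) ?_
    exact Measurable.lintegral_prod_right'
      (f := fun p : (α × γ) × β => v (p.1.1, p.2, p.1.2)) (by fun_prop)
  have hAint : ∫⁻ q, u q ∂(μ.prod (ν.prod κ)) = ∫⁻ y, A y ∂ν := by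
    rw [lintegral_prod_symm _ hu.aemeasurable, lintegral_prod]
    exact (Measurable.lintegral_prod_left' hu).aemeasurable
  have hBint : ∫⁻ q, v q ∂(μ.prod (ν.prod κ)) = ∫⁻ x, B x ∂μ := by
    rw [lintegral_prod _ hv.aemeasurable]
    refine lintegral_congr fun x => ?_
    rw [lintegral_prod_symm _ (by fun_prop)]
  calc ∫⁻ p, (∫⁻ z, φ (p.1, p.2, z) ∂κ) ^ 2 ∂(μ.prod ν)
      ≤ ∫⁻ p, B p.1 * A p.2 ∂(μ.prod ν) := by
        refine lintegral_mono_ae ?_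
        filter_upwards [Measure.quasiMeasurePreserving_fst.ae hφu,
          Measure.quasiMeasurePreserving_snd.ae hφv] with p h₁ h₂
        rw [sq]
        exact mul_le_mul' (lintegral_mono fun z => h₂ _ z) (lintegral_mono fun z => h₁ _ z)
    _ = (∫⁻ x, B x ∂μ) * ∫⁻ y, A y ∂ν :=
        lintegral_prod_mul hBm.aemeasurable hAm.aemeasurable
    _ = _ := by rw [hAint, hBint, mul_comm]

/-- Cauchy–Schwarz for the lower Lebesgue integral, against the constant function. -/
lemma sq_lintegral_enorm_le {α : Type*} [MeasurableSpace α] {μ : Measure α} {g : α → ℝ}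
    (hg : AEStronglyMeasurable g μ) :
    (∫⁻ x, ‖g x‖ₑ ∂μ) ^ 2 ≤ μ Set.univ * ∫⁻ x, ‖g x‖ₑ ^ 2 ∂μ := by
  have := ENNReal.lintegral_mul_le_Lp_mul_Lq μ Real.HolderConjugate.two_two
    (aemeasurable_const (b := (1 : ℝ≥0∞))) hg.enorm
  simp only [Pi.mul_apply, one_mul, ENNReal.rpow_two, one_pow, lintegral_one] at this
  calc _ ≤ _ := pow_le_pow_left' this 2
    _ = _ := by
      rw [mul_pow, ← ENNReal.rpow_mul_natCast, ← ENNReal.rpow_mul_natCast]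
      simp

lemma eLpNorm_two_sq {α : Type*} [MeasurableSpace α] {μ : Measure α} (g : α → ℝ) :
    eLpNorm g 2 μ ^ 2 = ∫⁻ x, ‖g x‖ₑ ^ 2 ∂μ := by
  simpa using eLpNorm_nnreal_pow_eq_lintegral (f := g) (μ := μ) (p := 2) two_ne_zero

lemma eLpNorm_four_pow {α : Type*} [MeasurableSpace α] {μ : Measure α} (g : α → ℝ) :
    eLpNorm g 4 μ ^ 4 = ∫⁻ x, ‖g x‖ₑ ^ 4 ∂μ := by
  have := eLpNorm_nnreal_pow_eq_lintegral (f := g) (μ := μ) (p := 4) four_ne_zero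
  norm_num at this
  exact_mod_cast this

/-- If `|d| ≤ G` then `∫ |g|² + 2 |g| |d|` is at most `2 ‖g‖₂ (‖g‖₂ + ‖G‖₂)`. -/
lemma lintegral_sq_add_two_mul_le {α : Type*} [MeasurableSpace α] {μ : Measure α}
    {g d G : α → ℝ} (hg : AEStronglyMeasurable g μ) (hd : AEStronglyMeasurable d μ)
    (hdG : ∀ x, ‖d x‖ ≤ G x) :
    ∫⁻ x, (‖g x‖ₑ ^ 2 + 2 * (‖g x‖ₑ * ‖d x‖ₑ)) ∂μ ≤
      2 * (eLpNorm g 2 μ * (eLpNorm g 2 μ + eLpNorm G 2 μ)) := by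
  have hcs : ∫⁻ x, ‖g x‖ₑ * ‖d x‖ₑ ∂μ ≤ eLpNorm g 2 μ * eLpNorm d 2 μ := by
    have := ENNReal.lintegral_mul_le_Lp_mul_Lq μ Real.HolderConjugate.two_two hg.enorm hd.enorm
    simpa [eLpNorm_eq_lintegral_rpow_enorm_toReal two_ne_zero ENNReal.ofNat_ne_top] using this
  have hmono : eLpNorm d 2 μ ≤ eLpNorm G 2 μ := eLpNorm_mono_real hdG
  rw [lintegral_add_left' (hg.enorm.pow_const 2),
    lintegral_const_mul'' _ (hg.enorm.fun_mul hd.enorm), ← eLpNorm_two_sq]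
  calc eLpNorm g 2 μ ^ 2 + 2 * ∫⁻ x, ‖g x‖ₑ * ‖d x‖ₑ ∂μ
      ≤ eLpNorm g 2 μ ^ 2 + 2 * (eLpNorm g 2 μ * eLpNorm G 2 μ) := by
        gcongr
        exact hcs.trans (by gcongr)
    _ ≤ 2 * eLpNorm g 2 μ ^ 2 + 2 * (eLpNorm g 2 μ * eLpNorm G 2 μ) := by
        gcongr
        exact le_mul_of_one_le_left' one_le_two
    _ = _ := by ring

lemma slabMeasure_eq_prod (h : ℝ) :
    slabMeasure h = (volume.restrict (Set.Ioo (0 : ℝ) 1)).prod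
      ((volume.restrict (Set.Ioo (0 : ℝ) 1)).prod (volume.restrict (Set.Ioo (-h) 0))) := by
  rw [slabMeasure, Measure.prod_restrict, Measure.prod_restrict, ← Measure.volume_eq_prod,
    ← Measure.volume_eq_prod]

lemma torus2Measure_eq_prod :
    torus2Measure =
      (volume.restrict (Set.Ioo (0 : ℝ) 1)).prod (volume.restrict (Set.Ioo (0 : ℝ) 1)) := by
  rw [torus2Measure, Measure.prod_restrict, ← Measure.volume_eq_prod]

lemma eLpNorm_slabMeasure_ne_top {h : ℝ} {g : ℝ × ℝ × ℝ → ℝ} (hg : Continuous g) :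
    eLpNorm g 2 (slabMeasure h) ≠ ∞ := by
  have hK : IsCompact (Set.Icc (0 : ℝ) 1 ×ˢ Set.Icc (0 : ℝ) 1 ×ˢ Set.Icc (-h) 0) :=
    isCompact_Icc.prod (isCompact_Icc.prod isCompact_Icc)
  obtain ⟨M, hM⟩ := hK.exists_bound_of_continuousOn hg.continuousOn
  have : IsFiniteMeasure (slabMeasure h) := by
    rw [slabMeasure_eq_prod]
    infer_instance
  refine (MemLp.of_bound hg.aestronglyMeasurable M ?_).eLpNorm_ne_top
  filter_upwards [ae_restrict_mem
    (measurableSet_Ioo.prod (measurableSet_Ioo.prod measurableSet_Ioo))] with p hp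
  exact hM p (Set.prod_mono Set.Ioo_subset_Icc_self
    (Set.prod_mono Set.Ioo_subset_Icc_self Set.Ioo_subset_Icc_self) hp)

/-- The fourth-power form of the estimate, in extended nonnegative reals. -/
lemma eLpNorm_vertical_integral_pow_four_le {h : ℝ} (hh : 0 < h) {f : ℝ × ℝ × ℝ → ℝ}
    (hf : ContDiff ℝ 1 f) :
    eLpNorm (fun xy : ℝ × ℝ => ∫ z in (-h)..(0 : ℝ), |f (xy.1, xy.2, z)|) 4 torus2Measure ^ 4 ≤
      (ENNReal.ofReal h * (2 * (eLpNorm f 2 (slabMeasure h) * (eLpNorm f 2 (slabMeasure h) +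
        eLpNorm (fun p =>
          Real.sqrt ((fderiv ℝ f p (1, 0, 0)) ^ 2 + (fderiv ℝ f p (0, 1, 0)) ^ 2))
          2 (slabMeasure h))))) ^ 2 := by
  have hfc : Continuous f := hf.continuous
  have hdc : ∀ v, Continuous fun p => fderiv ℝ f p v := fun v =>
    (hf.continuous_fderiv one_ne_zero).clm_apply continuous_const
  have hfd : ∀ p, HasFDerivAt f (fderiv ℝ f p) p := fun p =>
    (hf.differentiable one_ne_zero p).hasFDerivAt
  set G : ℝ × ℝ × ℝ → ℝ := fun p =>
    Real.sqrt ((fderiv ℝ f p (1, 0, 0)) ^ 2 + (fderiv ℝ f p (0, 1, 0)) ^ 2)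
  let w : ℝ × ℝ × ℝ → ℝ × ℝ × ℝ → ℝ≥0∞ := fun v p =>
    ‖f p‖ₑ ^ 2 + 2 * (‖f p‖ₑ * ‖fderiv ℝ f p v‖ₑ)
  have hw : ∀ v, Measurable (w v) := fun v => by
    have := hfc.measurable
    have := (hdc v).measurable
    fun_prop
  have hwu : ∫⁻ p, w (1, 0, 0) p ∂slabMeasure h ≤
      2 * (eLpNorm f 2 (slabMeasure h) * (eLpNorm f 2 (slabMeasure h) +
        eLpNorm G 2 (slabMeasure h))) :=
    lintegral_sq_add_two_mul_le hfc.aestronglyMeasurable (hdc _).aestronglyMeasurable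
      fun p => Real.abs_le_sqrt (le_add_of_nonneg_right (sq_nonneg _))
  have hwv : ∫⁻ p, w (0, 1, 0) p ∂slabMeasure h ≤
      2 * (eLpNorm f 2 (slabMeasure h) * (eLpNorm f 2 (slabMeasure h) +
        eLpNorm G 2 (slabMeasure h))) :=
    lintegral_sq_add_two_mul_le hfc.aestronglyMeasurable (hdc _).aestronglyMeasurable
      fun p => Real.abs_le_sqrt (le_add_of_nonneg_left (sq_nonneg _))
  have hslice : ∀ x y, ‖∫ z in (-h)..(0 : ℝ), |f (x, y, z)|‖ₑ ^ 2 ≤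
      ENNReal.ofReal h * ∫⁻ z in Set.Ioo (-h) 0, ‖f (x, y, z)‖ₑ ^ 2 := by
    intro x y
    rw [intervalIntegral.integral_of_le (by linarith), integral_Ioc_eq_integral_Ioo]
    have hcs := sq_lintegral_enorm_le (μ := volume.restrict (Set.Ioo (-h) 0))
      (g := fun z => f (x, y, z)) (by fun_prop)
    rw [Measure.restrict_apply_univ, Real.volume_Ioo, zero_sub, neg_neg] at hcs
    refine le_trans (pow_le_pow_left' ?_ 2) hcs
    simpa using enorm_integral_le_lintegral_enorm (μ := volume.restrict (Set.Ioo (-h) 0))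
      (fun z => |f (x, y, z)|)
  have hmain := lintegral_sq_lintegral_le (μ := volume.restrict (Set.Ioo (0 : ℝ) 1))
    (ν := volume.restrict (Set.Ioo (0 : ℝ) 1)) (κ := volume.restrict (Set.Ioo (-h) 0))
    (φ := fun p => ‖f p‖ₑ ^ 2) (hw (1, 0, 0)) (hw (0, 1, 0))
    (by
      filter_upwards [ae_restrict_mem measurableSet_Ioo] with x hx y z
      refine enorm_sq_le_lintegral_unitInterval (g := fun s => f (s, y, z))
        (g' := fun s => fderiv ℝ f (s, y, z) (1, 0, 0)) (fun s => ?_)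
        ((hdc _).comp (by fun_prop)) hx
      exact (hfd (s, y, z)).comp_hasDerivAt s
        ((hasDerivAt_id s).prodMk ((hasDerivAt_const s y).prodMk (hasDerivAt_const s z))))
    (by
      filter_upwards [ae_restrict_mem measurableSet_Ioo] with y hy x z
      refine enorm_sq_le_lintegral_unitInterval (g := fun s => f (x, s, z))
        (g' := fun s => fderiv ℝ f (x, s, z) (0, 1, 0)) (fun s => ?_)
        ((hdc _).comp (by fun_prop)) hy
      exact (hfd (x, s, z)).comp_hasDerivAt s
        ((hasDerivAt_const s x).prodMk ((hasDerivAt_id s).prodMk (hasDerivAt_const s z))))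
  rw [← slabMeasure_eq_prod, ← torus2Measure_eq_prod] at hmain
  rw [eLpNorm_four_pow]
  calc ∫⁻ p : ℝ × ℝ, ‖∫ z in (-h)..(0 : ℝ), |f (p.1, p.2, z)|‖ₑ ^ 4 ∂torus2Measure
      ≤ ∫⁻ p : ℝ × ℝ, ENNReal.ofReal h ^ 2 *
          (∫⁻ z in Set.Ioo (-h) 0, ‖f (p.1, p.2, z)‖ₑ ^ 2) ^ 2 ∂torus2Measure := by
        refine lintegral_mono fun p => ?_
        rw [← mul_pow, show 4 = 2 * 2 from rfl, pow_mul]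
        exact pow_le_pow_left' (hslice p.1 p.2) 2
    _ = ENNReal.ofReal h ^ 2 * ∫⁻ p : ℝ × ℝ,
          (∫⁻ z in Set.Ioo (-h) 0, ‖f (p.1, p.2, z)‖ₑ ^ 2) ^ 2 ∂torus2Measure :=
        lintegral_const_mul' _ _ (ENNReal.pow_ne_top ENNReal.ofReal_ne_top)
    _ ≤ _ := by
        rw [mul_pow]
        gcongr
        refine hmain.trans ?_
        rw [sq]
        exact mul_le_mul' hwu hwv

/-- The anisotropic estimate
`‖∫_{−h}^{0} |f(·,·,z)| dz‖_{L⁴(𝕋²)} ≤ C h^{1/2} ‖f‖_{L²(Ω)}^{1/2} (‖f‖_{L²(Ω)} + ‖∇₂f‖_{L²(Ω)})^{1/2}`,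
with `C` independent of `h` and `f`. -/
theorem vertical_integral_L4_estimate :
    ∃ C : ℝ, 0 < C ∧
      ∀ (h : ℝ), 0 < h →
        ∀ f : ℝ × ℝ × ℝ → ℝ, ContDiff ℝ 1 f → HorizontallyPeriodic f →
          (eLpNorm (fun xy : ℝ × ℝ => ∫ z in (-h)..(0 : ℝ), |f (xy.1, xy.2, z)|) 4
              torus2Measure).toReal ≤
            C * Real.sqrt h * (eLpNorm f 2 (slabMeasure h)).toReal ^ ((1 : ℝ) / 2) *
              ((eLpNorm f 2 (slabMeasure h)).toReal +
                  (eLpNorm (fun p =>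
                      Real.sqrt ((fderiv ℝ f p (1, 0, 0)) ^ 2 + (fderiv ℝ f p (0, 1, 0)) ^ 2))
                    2 (slabMeasure h)).toReal) ^ ((1 : ℝ) / 2) := by
  refine ⟨2, two_pos, fun h hh f hf _ => ?_⟩
  have hN : eLpNorm f 2 (slabMeasure h) ≠ ∞ := eLpNorm_slabMeasure_ne_top hf.continuous
  have hD : eLpNorm (fun p =>
      Real.sqrt ((fderiv ℝ f p (1, 0, 0)) ^ 2 + (fderiv ℝ f p (0, 1, 0)) ^ 2))
      2 (slabMeasure h) ≠ ∞ := by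
    have hdc : ∀ v, Continuous fun p => fderiv ℝ f p v := fun v =>
      (hf.continuous_fderiv one_ne_zero).clm_apply continuous_const
    exact eLpNorm_slabMeasure_ne_top ((((hdc _).pow 2).add ((hdc _).pow 2)).sqrt)
  have hpow := ENNReal.toReal_mono (by finiteness) (eLpNorm_vertical_integral_pow_four_le hh hf)
  simp only [ENNReal.toReal_pow, ENNReal.toReal_mul, ENNReal.toReal_add hN hD,
    ENNReal.toReal_ofReal hh.le, ENNReal.toReal_ofNat] at hpow
  set N := (eLpNorm f 2 (slabMeasure h)).toReal
  set D := (eLpNorm (fun p =>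
      Real.sqrt ((fderiv ℝ f p (1, 0, 0)) ^ 2 + (fderiv ℝ f p (0, 1, 0)) ^ 2))
      2 (slabMeasure h)).toReal
  have hN0 : 0 ≤ N := ENNReal.toReal_nonneg
  have hD0 : 0 ≤ D := ENNReal.toReal_nonneg
  rw [← Real.sqrt_eq_rpow, ← Real.sqrt_eq_rpow]
  refine le_of_pow_le_pow_left₀ four_ne_zero (by positivity) (hpow.trans ?_)
  have hsqrt : ∀ a : ℝ, 0 ≤ a → Real.sqrt a ^ 4 = a ^ 2 := fun a ha => by
    rw [show 4 = 2 * 2 from rfl, pow_mul, Real.sq_sqrt ha]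
  simp only [mul_pow]
  rw [hsqrt h hh.le, hsqrt N hN0, hsqrt (N + D) (by positivity)]
  have : 0 ≤ h ^ 2 * N ^ 2 * (N + D) ^ 2 := by positivity
  nlinarith
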